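/- Let G be a finite connected graph obtained by gluing three trees T_1, T_2, T_3 along a common vertex set V of size n ≥ 3 (the trees pairwise disjoint away from V). Then the divisor D assigning 1 to each vertex of V and 0 elsewhere has Baker–Norine rank at least 1. -/

import Mathlib

open Finset in
/-- The degree of a divisor (an integer-valued function on vertices). -/
def divDeg {V : Type*} [Fintype V] (D : V → ℤ) : ℤ := ∑ v, D v

open scoped Classical in
/-- The graph Laplacian applied to an integer-valued function on vertices. -/
noncomputable def graphLaplacian {V : Type*} [Fintype V] (G : SimpleGraph V)
    (f : V → ℤ) : V → ℤ :=
  fun v => ∑ w, if G.Adj v w then f v - f w else 0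

/-- Two divisors are linearly equivalent if they differ by a Laplacian. -/
def LinEquiv {V : Type*} [Fintype V] (G : SimpleGraph V) (D D' : V → ℤ) : Prop :=
  ∃ f : V → ℤ, D' = D + graphLaplacian G f

/-- A divisor is effective if it is nonnegative at every vertex. -/
def Effective {V : Type*} (D : V → ℤ) : Prop := ∀ v, 0 ≤ D v

/-- A divisor is winnable if it is linearly equivalent to an effective divisor. -/
def Winnable {V : Type*} [Fintype V] (G : SimpleGraph V) (D : V → ℤ) : Prop :=
  ∃ D', LinEquiv G D D' ∧ Effective D'

/-- The Baker–Norine rank of `D` is at least `r` if `D - E` is winnable for every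
effective divisor `E` of degree `r`. -/
def RankGe {V : Type*} [Fintype V] (G : SimpleGraph V) (D : V → ℤ) (r : ℕ) : Prop :=
  ∀ E : V → ℤ, Effective E → divDeg E = r → Winnable G (D - E)

/-- The vertices that can be reached from `w` in `G` through vertices of `U`. -/
def componentIn {V : Type*} (G : SimpleGraph V) (U : Set V) (w : V) : Set V :=
  {x | Relation.ReflTransGen (fun y z => G.Adj y z ∧ z ∈ U) w x}

theorem componentIn_subset {V : Type*} {G : SimpleGraph V} {U : Set V} {w : V} (hw : w ∈ U) :
    componentIn G U w ⊆ U := by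
  intro x hx
  cases hx with
  | refl => exact hw
  | tail _ h => exact h.2

theorem mem_componentIn_self {V : Type*} (G : SimpleGraph V) (U : Set V) (w : V) :
    w ∈ componentIn G U w :=
  Relation.ReflTransGen.refl

theorem mem_componentIn_of_adj {V : Type*} {G : SimpleGraph V} {U : Set V} {w a v : V}
    (ha : a ∈ componentIn G U w) (hadj : G.Adj a v) (hv : v ∈ U) : v ∈ componentIn G U w :=
  Relation.ReflTransGen.tail ha ⟨hadj, hv⟩

theorem graphLaplacian_add {V : Type*} [Fintype V] (G : SimpleGraph V) (f g : V → ℤ) :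
    graphLaplacian G (f + g) = graphLaplacian G f + graphLaplacian G g := by
  classical
  funext v
  simp only [graphLaplacian, Pi.add_apply, ← Finset.sum_add_distrib]
  refine Finset.sum_congr rfl fun w _ => ?_
  split_ifs <;> ring

theorem LinEquiv.trans {V : Type*} [Fintype V] {G : SimpleGraph V} {D D' D'' : V → ℤ}
    (h : LinEquiv G D D') (h' : LinEquiv G D' D'') : LinEquiv G D D'' := by
  obtain ⟨f, rfl⟩ := h
  obtain ⟨g, rfl⟩ := h'
  exact ⟨f + g, by rw [graphLaplacian_add, add_assoc]⟩

theorem LinEquiv.sub_right {V : Type*} [Fintype V] {G : SimpleGraph V} {D D' : V → ℤ}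
    (h : LinEquiv G D D') (E : V → ℤ) : LinEquiv G (D - E) (D' - E) := by
  obtain ⟨f, rfl⟩ := h
  exact ⟨f, by abel⟩

theorem graphLaplacian_indicator_nonneg {V : Type*} [Fintype V] (G : SimpleGraph V) {A : Set V}
    {v : V} (hv : v ∈ A) : 0 ≤ graphLaplacian G (A.indicator 1) v := by
  classical
  refine Finset.sum_nonneg fun w _ => ?_
  by_cases hw : w ∈ A <;> by_cases h : G.Adj v w <;> simp [hv, hw, h]

theorem graphLaplacian_indicator_pos {V : Type*} [Fintype V] {G : SimpleGraph V} {A : Set V}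
    {v w : V} (hv : v ∈ A) (hw : w ∉ A) (hadj : G.Adj v w) :
    1 ≤ graphLaplacian G (A.indicator 1) v := by
  classical
  have key := Finset.single_le_sum (s := Finset.univ)
    (f := fun w => if G.Adj v w then A.indicator (1 : V → ℤ) v - A.indicator 1 w else 0)
    (fun u _ => by by_cases hu : u ∈ A <;> by_cases h : G.Adj v u <;> simp [hv, hu, h])
    (Finset.mem_univ w)
  simpa [hv, hw, hadj, graphLaplacian] using key

theorem graphLaplacian_indicator_eq_zero {V : Type*} [Fintype V] {G : SimpleGraph V} {A : Set V}
    {v : V} (hv : v ∉ A) (h : ∀ a ∈ A, ¬ G.Adj v a) :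
    graphLaplacian G (A.indicator 1) v = 0 := by
  classical
  refine Finset.sum_eq_zero fun w _ => ?_
  by_cases hw : w ∈ A
  · simp [h w hw]
  · simp [hv, hw]

theorem graphLaplacian_indicator_of_unique_adj {V : Type*} [Fintype V] {G : SimpleGraph V}
    {A : Set V} {v a : V} (hv : v ∉ A) (ha : a ∈ A) (hadj : G.Adj v a)
    (huniq : ∀ b ∈ A, G.Adj v b → b = a) :
    graphLaplacian G (A.indicator 1) v = -1 := by
  classical
  unfold graphLaplacian
  rw [Finset.sum_eq_single a]
  · simp [hv, ha, hadj]
  · intro b _ hb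
    by_cases hbA : b ∈ A
    · rw [if_neg fun h => hb (huniq b hbA h)]
    · simp [hv, hbA]
  · simp

/-- Repeatedly firing the complement of the component of `w` among the chip-free vertices
eventually brings a chip to `w`, provided no vertex sends two edges into such a component. -/
theorem exists_linEquiv_effective_one_le {V : Type*} [Fintype V] {G : SimpleGraph V}
    (hG : G.Connected) {S : Set V} (hS : S.Nonempty) {w : V}
    (huniq : ∀ U : Set V, w ∈ U → Disjoint U S → ∀ v ∉ componentIn G U w,
      ∀ a ∈ componentIn G U w, ∀ b ∈ componentIn G U w, G.Adj v a → G.Adj v b → b = a)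
    (U : Set V) (hwU : w ∈ U) (hUS : Disjoint U S) (E : V → ℤ) (hE : Effective E)
    (hchip : ∀ v ∉ U, ∀ a ∈ componentIn G U w, G.Adj v a → 1 ≤ E v) :
    ∃ E', LinEquiv G E E' ∧ Effective E' ∧ 1 ≤ E' w := by
  induction hn : U.ncard using Nat.strong_induction_on generalizing U E with
  | _ n ih =>
  subst hn
  set A := componentIn G U w with hA
  have hAU : A ⊆ U := componentIn_subset hwU
  set F := E + graphLaplacian G (A.indicator 1) with hF
  have hEF : LinEquiv G E F := ⟨_, rfl⟩
  have hFeff : Effective F := by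
    intro v
    rw [hF, Pi.add_apply]
    have hEv := hE v
    by_cases hv : v ∈ A
    · have := graphLaplacian_indicator_nonneg G hv
      lia
    · by_cases h : ∃ a ∈ A, G.Adj v a
      · obtain ⟨a, ha, hadj⟩ := h
        have hvU : v ∉ U := fun hvU => hv (mem_componentIn_of_adj ha hadj.symm hvU)
        have := hchip v hvU a ha hadj
        rw [graphLaplacian_indicator_of_unique_adj hv ha hadj
          fun b hb hvb => huniq U hwU hUS v hv a ha b hb hadj hvb]
        lia
      · push Not at h
        rw [graphLaplacian_indicator_eq_zero hv h]
        lia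
  have hFpos : ∀ a ∈ A, ∀ v ∉ A, G.Adj a v → 1 ≤ F a := by
    intro a ha v hv hadj
    have := graphLaplacian_indicator_pos ha hv hadj
    have := hE a
    rw [hF, Pi.add_apply]
    lia
  by_cases hFw : 1 ≤ F w
  · exact ⟨F, hEF, hFeff, hFw⟩
  have hF0 : F w = 0 := by have := hFeff w; lia
  have hwU' : w ∈ {v ∈ A | F v = 0} := ⟨mem_componentIn_self G U w, hF0⟩
  have hsub : {v ∈ A | F v = 0} ⊂ U := by
    refine ⟨fun v hv => hAU hv.1, fun hsup => ?_⟩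
    obtain ⟨s, hs⟩ := hS
    obtain ⟨p⟩ := hG.preconnected w s
    obtain ⟨d, -, hd, hd'⟩ := p.exists_boundary_dart A (mem_componentIn_self G U w)
      fun h => Set.disjoint_left.1 hUS (hAU h) hs
    have h1 := hFpos _ hd _ hd' d.adj
    have h2 := (hsup (hAU hd)).2
    lia
  obtain ⟨E', hFE', h⟩ := ih _ (Set.ncard_lt_ncard hsub U.toFinite) _ hwU'
    (hUS.mono_left hsub.1) F hFeff (by
      intro v hv a ha hadj
      have haU := componentIn_subset hwU' ha
      by_cases hvA : v ∈ A
      · have h0 : F v ≠ 0 := fun h0 => hv ⟨hvA, h0⟩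
        have := hFeff v
        lia
      · have h1 := hFpos a haU.1 v hvA hadj.symm
        have h2 := haU.2
        lia) rfl
  exact ⟨E', hEF.trans hFE', h⟩

/-- If `H` is an acyclic subgraph containing every edge of `G` that meets `componentIn G U w`, then
no vertex outside this component has two neighbours in it. -/
theorem eq_of_adj_componentIn {V : Type*} {G : SimpleGraph V} {H : G.Subgraph}
    (hH : H.coe.IsAcyclic) {U : Set V} {w : V} (hw : w ∈ H.verts)
    (hadj : ∀ x ∈ componentIn G U w, x ∈ H.verts → ∀ y, G.Adj x y → H.Adj x y)
    {v a b : V} (hv : v ∉ componentIn G U w) (ha : a ∈ componentIn G U w)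
    (hb : b ∈ componentIn G U w) (hva : G.Adj v a) (hvb : G.Adj v b) : b = a := by
  have hverts : ∀ x ∈ componentIn G U w, x ∈ H.verts := by
    intro x hx
    induction hx with
    | refl => exact hw
    | tail hy hyz ih => exact (hadj _ hy ih _ hyz.1).snd_mem
  have hHva := (hadj a ha (hverts a ha) v hva.symm).symm
  have hHvb := (hadj b hb (hverts b hb) v hvb.symm).symm
  have hvH := hHva.fst_mem
  by_contra hne
  set K := H.coe \ SimpleGraph.fromEdgeSet
    {s((⟨v, hvH⟩ : H.verts), (⟨a, hverts a ha⟩ : H.verts))} with hK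
  have hreach : ∀ x (hx : x ∈ componentIn G U w),
      K.Reachable ⟨w, hw⟩ ⟨x, hverts x hx⟩ := by
    intro x hx
    induction hx with
    | refl => exact SimpleGraph.Reachable.refl _
    | @tail y z hy hyz ih =>
      refine ih.trans (SimpleGraph.Adj.reachable ?_)
      have hz := mem_componentIn_of_adj hy hyz.1 hyz.2
      have hyv : y ≠ v := fun h => hv (h ▸ hy)
      have hzv : z ≠ v := fun h => hv (h ▸ hz)
      simp [hK, hyv, hzv, hadj y hy (hverts y hy) z hyz.1]
  have hKvb : K.Adj ⟨v, hvH⟩ ⟨b, hverts b hb⟩ := by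
    simp [hK, hHvb, hne, hva.ne]
  have hbridge := (SimpleGraph.isAcyclic_iff_forall_adj_isBridge.1 hH)
    (v := ⟨v, hvH⟩) (w := ⟨a, hverts a ha⟩) hHva
  exact (SimpleGraph.isBridge_iff.1 hbridge)
    (hKvb.reachable.trans ((hreach b hb).symm.trans (hreach a ha)))

theorem rankGe_one_of_forall_linEquiv {V : Type*} [Fintype V] {G : SimpleGraph V} {D : V → ℤ}
    (h : ∀ w, ∃ D', LinEquiv G D D' ∧ Effective D' ∧ 1 ≤ D' w) : RankGe G D 1 := by
  classical
  intro E hE hdeg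
  simp only [divDeg, Nat.cast_one] at hdeg
  obtain ⟨w, -, hw⟩ := Finset.exists_ne_zero_of_sum_ne_zero
    (s := Finset.univ) (f := E) (by rw [hdeg]; exact one_ne_zero)
  obtain ⟨D', hDD', hD', hD'w⟩ := h w
  refine ⟨D' - E, hDD'.sub_right E, fun v => ?_⟩
  have hEw := hE w
  have hD'v := hD' v
  rw [Pi.sub_apply]
  by_cases hv : v = w
  · subst hv
    have := Finset.single_le_sum (fun u _ => hE u) (Finset.mem_univ v)
    lia
  · have := Finset.add_le_sum (fun u _ => hE u) (Finset.mem_univ v) (Finset.mem_univ w) hv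
    lia

open scoped Classical in
theorem rank_ge_one_tree_decomposed {W : Type*} [Fintype W] (G : SimpleGraph W)
    (hG : G.Connected) (T : Fin 3 → G.Subgraph) (S : Set W) (n : ℕ) (hn : 3 ≤ n)
    (hS : S.ncard = n)
    (htree : ∀ i, ((T i).coe).IsTree)
    (hverts : ∀ i j, i ≠ j → (T i).verts ∩ (T j).verts = S)
    (hedges : ∀ i j, i ≠ j → Disjoint (T i).edgeSet (T j).edgeSet)
    (hecup : (⋃ i, (T i).edgeSet) = G.edgeSet)
    (hvcup : (⋃ i, (T i).verts) = Set.univ) :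
    RankGe G (fun v => if v ∈ S then 1 else 0) 1 := by
  refine rankGe_one_of_forall_linEquiv fun w => ?_
  have hD : Effective fun v => if v ∈ S then (1 : ℤ) else 0 := by
    intro v
    dsimp only
    split_ifs <;> norm_num
  by_cases hwS : w ∈ S
  · exact ⟨_, ⟨0, by ext; simp [graphLaplacian]⟩, hD, by simp [hwS]⟩
  have hSne : S.Nonempty := Set.nonempty_of_ncard_ne_zero (by lia)
  obtain ⟨i, hi⟩ := Set.mem_iUnion.1 (hvcup ▸ Set.mem_univ w)
  have hadj : ∀ x ∉ S, x ∈ (T i).verts → ∀ y, G.Adj x y → (T i).Adj x y := by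
    intro x hxS hx y hxy
    have hmem : s(x, y) ∈ ⋃ i, (T i).edgeSet := hecup ▸ hxy
    obtain ⟨j, hj⟩ := Set.mem_iUnion.1 hmem
    rw [SimpleGraph.Subgraph.mem_edgeSet] at hj
    obtain rfl | hij := eq_or_ne i j
    · exact hj
    · exact absurd (hverts i j hij ▸ ⟨hx, hj.fst_mem⟩) hxS
  refine exists_linEquiv_effective_one_le hG hSne ?_ Sᶜ hwS disjoint_compl_left _ hD ?_
  · intro U hwU hUS v hv a ha b hb hva hvb
    exact eq_of_adj_componentIn (htree i).isAcyclic hi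
      (fun x hx => hadj x (Set.disjoint_left.1 hUS (componentIn_subset hwU hx))) hv ha hb hva hvb
  · intro v hv _ _ _
    simp [Set.notMem_compl_iff.1 hv]
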